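/- Let i denote the imaginary unit and let A = [[1,1],[−1/2,1/2]], B = [[0,1],[−1,0]], C = [[1/2,−i/2],[−i,1]], D = [[i,1],[−1/2,−i/2]]. Then for the 4-arity CNOT1 gate G = |0000⟩ + |0110⟩ + |1011⟩ + |1101⟩, one has (A⊗B⊗C⊗D)G = |0000⟩ + (i/2)|1100⟩ − i|1010⟩ − (i/4)|1001⟩ − 2|0110⟩ + (1/2)|0101⟩ − |0011⟩ + (i/2)|1111⟩. Consequently CNOT1 is Pfaffian under the heterogeneous change of basis (A, B, C, D), the right-hand side being sPf(Ξ) for the skew-symmetric matrix Ξ with upper-triangular entries Ξ₁₂ = i/2, Ξ₁₃ = −i, Ξ₁₄ = −i/4, Ξ₂₃ = −2, Ξ₂₄ = 1/2, Ξ₃₄ = −1. -/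

import Mathlib

/-!
Both claims are equalities of vectors indexed by the sixteen bitstrings of length four. Since CNOT1
is a sum of four basis vectors, each coordinate of the transformed gate is a sum of four products of
matrix entries (`cobGate_cnot1`). The sub-Pfaffian vector is evaluated from the Laplace expansion:
it is `1` on the empty support, `0` on odd supports (`subPf_of_odd`), the matrix entry on pairs
(`subPf_pair`), and the usual three-term `4 × 4` Pfaffian on the full support (`subPf_univ_four`).
The comparison is then arithmetic in `ℚ(i)`; at the full support it reads
`(i/2)(-1) - (-i)(1/2) + (-i/4)(-2) = i/2`.
-/

open scoped BigOperators

noncomputable section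

/-- Change of basis on an `n`-arity gate: `((A₁⊗…⊗Aₙ)G)(b) = Σ_c (∏ᵢ Aᵢ(bᵢ,cᵢ))·G(c)`. -/
def cobGate {n : ℕ} (A : Fin n → Matrix (Fin 2) (Fin 2) ℂ) (G : (Fin n → Fin 2) → ℂ) :
    (Fin n → Fin 2) → ℂ :=
  fun b => ∑ c : Fin n → Fin 2, (∏ i, A i (b i) (c i)) * G c

/-- Change of basis on an `n`-arity cogate: `C′(b) = Σ_c C(c)·∏ᵢ Aᵢ⁻¹(cᵢ,bᵢ)`. -/
def cobCogate {n : ℕ} (A : Fin n → Matrix (Fin 2) (Fin 2) ℂ) (C : (Fin n → Fin 2) → ℂ) :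
    (Fin n → Fin 2) → ℂ :=
  fun b => ∑ c : Fin n → Fin 2, C c * ∏ i, (A i)⁻¹ (c i) (b i)

/-- The standard basis vector (ket/bra) at the bitstring `v`. -/
def ket {n : ℕ} (v : Fin n → Fin 2) : (Fin n → Fin 2) → ℂ :=
  fun b => if b = v then 1 else 0

/-- The support of a bitstring. -/
def supp {n : ℕ} (b : Fin n → Fin 2) : Finset (Fin n) :=
  Finset.univ.filter fun i => b i = 1

/-- Fuel-driven Laplace expansion of the Pfaffian of a principal submatrix. -/
def subPfAux {n : ℕ} (Ξ : Matrix (Fin n) (Fin n) ℂ) : ℕ → Finset (Fin n) → ℂ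
  | 0, I => if I = ∅ then 1 else 0
  | fuel + 1, I =>
    if hI : I.Nonempty then
      if Odd I.card then 0
      else
        ∑ i ∈ I.erase (I.min' hI),
          (-1 : ℂ) ^ (I.filter fun j => j ≤ i).card * Ξ (I.min' hI) i *
            subPfAux Ξ fuel ((I.erase (I.min' hI)).erase i)
    else 1

/-- `subPf Ξ I` is the Pfaffian `Pf(Ξ|_I)` of the principal submatrix of `Ξ` on the
rows and columns in `I` (`1` on the empty set, `0` for odd `|I|`). -/
def subPf {n : ℕ} (Ξ : Matrix (Fin n) (Fin n) ℂ) (I : Finset (Fin n)) : ℂ :=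
  subPfAux Ξ I.card I

/-- The sub-Pfaffian vector: coordinate `Pf(Ξ|_I)` at the bitstring with support `I`. -/
def sPf {n : ℕ} (Ξ : Matrix (Fin n) (Fin n) ℂ) : (Fin n → Fin 2) → ℂ :=
  fun b => subPf Ξ (supp b)

/-- The dual sub-Pfaffian vector: coordinate `Pf(Θ|_{Jᶜ})` at the bitstring with support `J`. -/
def sPfStar {n : ℕ} (Θ : Matrix (Fin n) (Fin n) ℂ) : (Fin n → Fin 2) → ℂ :=
  fun b => subPf Θ (supp b)ᶜ

/-- A matrix is skew-symmetric. -/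
def IsSkew {n : ℕ} (Ξ : Matrix (Fin n) (Fin n) ℂ) : Prop :=
  ∀ i j, Ξ j i = -Ξ i j

/-- A gate is Pfaffian under the change of basis `M`. -/
def IsPfaffGate {n : ℕ} (M : Fin n → Matrix (Fin 2) (Fin 2) ℂ) (G : (Fin n → Fin 2) → ℂ) : Prop :=
  ∃ (α : ℂ) (Ξ : Matrix (Fin n) (Fin n) ℂ), IsSkew Ξ ∧ cobGate M G = fun b => α * sPf Ξ b

/-- A cogate is Pfaffian under the change of basis `M`. -/
def IsPfaffCogate {n : ℕ} (M : Fin n → Matrix (Fin 2) (Fin 2) ℂ) (C : (Fin n → Fin 2) → ℂ) : Prop :=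
  ∃ (β : ℂ) (Θ : Matrix (Fin n) (Fin n) ℂ), IsSkew Θ ∧ cobCogate M C = fun b => β * sPfStar Θ b

/-- The 4-arity CNOT1 gate. -/
def cnot1 : (Fin 4 → Fin 2) → ℂ :=
  ket ![0, 0, 0, 0] + ket ![0, 1, 1, 0] + ket ![1, 0, 1, 1] + ket ![1, 1, 0, 1]

def mA : Matrix (Fin 2) (Fin 2) ℂ := !![1, 1; -(1/2), 1/2]
def mB : Matrix (Fin 2) (Fin 2) ℂ := !![0, 1; -1, 0]
def mC : Matrix (Fin 2) (Fin 2) ℂ := !![1/2, -Complex.I/2; -Complex.I, 1]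
def mD : Matrix (Fin 2) (Fin 2) ℂ := !![Complex.I, 1; -(1/2), -Complex.I/2]

def xiCnot : Matrix (Fin 4) (Fin 4) ℂ :=
  !![0, Complex.I/2, -Complex.I, -Complex.I/4;
     -(Complex.I/2), 0, -2, 1/2;
     Complex.I, 2, 0, -1;
     Complex.I/4, -(1/2), 1, 0]

lemma cobGate_ket {n : ℕ} (A : Fin n → Matrix (Fin 2) (Fin 2) ℂ) (v b : Fin n → Fin 2) :
    cobGate A (ket v) b = ∏ i, A i (b i) (v i) := by
  simp [cobGate, ket]

lemma cobGate_add {n : ℕ} (A : Fin n → Matrix (Fin 2) (Fin 2) ℂ) (G H : (Fin n → Fin 2) → ℂ) :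
    cobGate A (G + H) = cobGate A G + cobGate A H := by
  funext b
  simp [cobGate, mul_add, Finset.sum_add_distrib]

lemma cobGate_cnot1 (p q r s : Fin 2) :
    cobGate ![mA, mB, mC, mD] cnot1 ![p, q, r, s] =
      mA p 0 * mB q 0 * mC r 0 * mD s 0 + mA p 0 * mB q 1 * mC r 1 * mD s 0
        + mA p 1 * mB q 0 * mC r 1 * mD s 1 + mA p 1 * mB q 1 * mC r 0 * mD s 1 := by
  simp only [cnot1, cobGate_add, Pi.add_apply, cobGate_ket, Fin.prod_univ_four]
  rfl

/-- One step of the Laplace expansion, with the least element of the index set named explicitly. -/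
lemma subPfAux_succ {n : ℕ} (Ξ : Matrix (Fin n) (Fin n) ℂ) (fuel : ℕ) (I : Finset (Fin n))
    (m : Fin n) (hm : m ∈ I) (hmin : ∀ x ∈ I, m ≤ x) (hI : ¬ Odd I.card) :
    subPfAux Ξ (fuel + 1) I =
      ∑ i ∈ I.erase m, (-1 : ℂ) ^ (I.filter fun j => j ≤ i).card * Ξ m i *
        subPfAux Ξ fuel ((I.erase m).erase i) := by
  have hne : I.Nonempty := ⟨m, hm⟩
  have hmm : I.min' hne = m :=
    le_antisymm (Finset.min'_le _ _ hm) (Finset.le_min' _ _ _ hmin)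
  simp only [subPfAux, dif_pos hne, if_neg hI, hmm]

lemma subPfAux_empty {n : ℕ} (Ξ : Matrix (Fin n) (Fin n) ℂ) (fuel : ℕ) :
    subPfAux Ξ fuel ∅ = 1 := by
  cases fuel <;> simp [subPfAux]

lemma subPf_empty {n : ℕ} (Ξ : Matrix (Fin n) (Fin n) ℂ) : subPf Ξ ∅ = 1 :=
  subPfAux_empty Ξ _

lemma subPf_of_odd {n : ℕ} (Ξ : Matrix (Fin n) (Fin n) ℂ) (I : Finset (Fin n))
    (hI : Odd I.card) : subPf Ξ I = 0 := by
  have hne : I.Nonempty := Finset.card_pos.mp hI.pos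
  obtain ⟨k, hk⟩ := Nat.exists_eq_succ_of_ne_zero hI.pos.ne'
  rw [subPf, hk]
  simp only [subPfAux, dif_pos hne, if_pos hI]

lemma subPfAux_pair {n : ℕ} (Ξ : Matrix (Fin n) (Fin n) ℂ) (fuel : ℕ) {i j : Fin n} (h : i < j) :
    subPfAux Ξ (fuel + 1) {i, j} = Ξ i j := by
  have hcard : ({i, j} : Finset (Fin n)).card = 2 := Finset.card_pair h.ne
  have herase : ({i, j} : Finset (Fin n)).erase i = {j} := by
    ext x; simp only [Finset.mem_erase, Finset.mem_insert, Finset.mem_singleton]; grind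
  have hfilter : ({i, j} : Finset (Fin n)).filter (fun x => x ≤ j) = {i, j} := by
    ext x; simp only [Finset.mem_filter, Finset.mem_insert, Finset.mem_singleton]; grind
  rw [subPfAux_succ Ξ fuel _ i (by simp) (by simp [h.le]) (by rw [hcard]; decide), herase,
    Finset.sum_singleton, hfilter, hcard]
  simp [subPfAux_empty]

lemma subPf_pair {n : ℕ} (Ξ : Matrix (Fin n) (Fin n) ℂ) {i j : Fin n} (h : i < j) :
    subPf Ξ {i, j} = Ξ i j := by
  rw [subPf, Finset.card_pair h.ne, subPfAux_pair Ξ 1 h]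

lemma subPf_univ_four (Ξ : Matrix (Fin 4) (Fin 4) ℂ) :
    subPf Ξ Finset.univ = Ξ 0 1 * Ξ 2 3 - Ξ 0 2 * Ξ 1 3 + Ξ 0 3 * Ξ 1 2 := by
  have herase : (Finset.univ : Finset (Fin 4)).erase 0 = {1, 2, 3} := by decide
  have h1 : ({1, 2, 3} : Finset (Fin 4)).erase 1 = {2, 3} := by decide
  have h2 : ({1, 2, 3} : Finset (Fin 4)).erase 2 = {1, 3} := by decide
  have h3 : ({1, 2, 3} : Finset (Fin 4)).erase 3 = {1, 2} := by decide
  have c1 : ((Finset.univ : Finset (Fin 4)).filter fun j => j ≤ 1).card = 2 := by decide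
  have c2 : ((Finset.univ : Finset (Fin 4)).filter fun j => j ≤ 2).card = 3 := by decide
  have c3 : ((Finset.univ : Finset (Fin 4)).filter fun j => j ≤ 3).card = 4 := by decide
  rw [subPf, Finset.card_univ, Fintype.card_fin,
    subPfAux_succ Ξ 3 _ 0 (by simp) (by simp) (by decide), herase,
    Finset.sum_insert (by decide), Finset.sum_insert (by decide), Finset.sum_singleton,
    h1, h2, h3, c1, c2, c3, subPfAux_pair Ξ 2 (by decide), subPfAux_pair Ξ 2 (by decide),
    subPfAux_pair Ξ 2 (by decide)]
  ring

lemma ket_four (p q r s p' q' r' s' : Fin 2) :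
    ket ![p, q, r, s] ![p', q', r', s'] =
      if p' = p ∧ q' = q ∧ r' = r ∧ s' = s then 1 else 0 := by
  have h : ![p', q', r', s'] = ![p, q, r, s] ↔ p' = p ∧ q' = q ∧ r' = r ∧ s' = s := by
    simp only [Matrix.vecCons_inj, and_true]
  simp only [ket, h]

/-- Coordinates of the `4`-bit sub-Pfaffian vector as a combination of basis vectors. -/
lemma sPf_four (Ξ : Matrix (Fin 4) (Fin 4) ℂ) (b : Fin 4 → Fin 2) :
    sPf Ξ b = ket ![0,0,0,0] b + Ξ 0 1 * ket ![1,1,0,0] b + Ξ 0 2 * ket ![1,0,1,0] b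
      + Ξ 0 3 * ket ![1,0,0,1] b + Ξ 1 2 * ket ![0,1,1,0] b + Ξ 1 3 * ket ![0,1,0,1] b
      + Ξ 2 3 * ket ![0,0,1,1] b
      + (Ξ 0 1 * Ξ 2 3 - Ξ 0 2 * Ξ 1 3 + Ξ 0 3 * Ξ 1 2) * ket ![1,1,1,1] b := by
  have e0 : supp ![0,0,0,0] = (∅ : Finset (Fin 4)) := by decide
  have e01 : supp ![1,1,0,0] = ({0, 1} : Finset (Fin 4)) := by decide
  have e02 : supp ![1,0,1,0] = ({0, 2} : Finset (Fin 4)) := by decide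
  have e03 : supp ![1,0,0,1] = ({0, 3} : Finset (Fin 4)) := by decide
  have e12 : supp ![0,1,1,0] = ({1, 2} : Finset (Fin 4)) := by decide
  have e13 : supp ![0,1,0,1] = ({1, 3} : Finset (Fin 4)) := by decide
  have e23 : supp ![0,0,1,1] = ({2, 3} : Finset (Fin 4)) := by decide
  have e4 : supp ![1,1,1,1] = (Finset.univ : Finset (Fin 4)) := by decide
  have key : b ∈ ({![0,0,0,0], ![1,1,0,0], ![1,0,1,0], ![1,0,0,1], ![0,1,1,0], ![0,1,0,1],
      ![0,0,1,1], ![1,1,1,1]} : Finset (Fin 4 → Fin 2)) ∨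
      Odd (supp b).card ∧ b ∉ ({![0,0,0,0], ![1,1,0,0], ![1,0,1,0], ![1,0,0,1], ![0,1,1,0],
        ![0,1,0,1], ![0,0,1,1], ![1,1,1,1]} : Finset (Fin 4 → Fin 2)) := by
    revert b; decide
  simp only [Finset.mem_insert, Finset.mem_singleton, not_or] at key
  rcases key with (rfl | rfl | rfl | rfl | rfl | rfl | rfl | rfl) | ⟨hodd, hb⟩
  · simp [sPf, ket, e0, subPf_empty]
  · rw [sPf, e01, subPf_pair Ξ (by decide)]; simp [ket]
  · rw [sPf, e02, subPf_pair Ξ (by decide)]; simp [ket]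
  · rw [sPf, e03, subPf_pair Ξ (by decide)]; simp [ket]
  · rw [sPf, e12, subPf_pair Ξ (by decide)]; simp [ket]
  · rw [sPf, e13, subPf_pair Ξ (by decide)]; simp [ket]
  · rw [sPf, e23, subPf_pair Ξ (by decide)]; simp [ket]
  · rw [sPf, e4, subPf_univ_four]; simp [ket]
  · rw [sPf, subPf_of_odd Ξ _ hodd]; simp [ket, hb]

lemma cobGate_cnot1_eq :
    cobGate ![mA, mB, mC, mD] cnot1 =
      fun b => ket ![0,0,0,0] b + (Complex.I/2) * ket ![1,1,0,0] b
        - Complex.I * ket ![1,0,1,0] b - (Complex.I/4) * ket ![1,0,0,1] b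
        - 2 * ket ![0,1,1,0] b + (1/2 : ℂ) * ket ![0,1,0,1] b
        - ket ![0,0,1,1] b + (Complex.I/2) * ket ![1,1,1,1] b := by
  funext b
  obtain ⟨p, q, r, s, rfl⟩ : ∃ p q r s, b = ![p, q, r, s] :=
    ⟨b 0, b 1, b 2, b 3, by funext i; fin_cases i <;> rfl⟩
  have hI : Complex.I ^ 2 = -1 := Complex.I_sq
  simp only [cobGate_cnot1, ket_four]
  revert p q r s
  simp only [Fin.forall_fin_two, mA, mB, mC, mD, Matrix.of_apply, Matrix.cons_val_zero,
    Matrix.cons_val_one, one_ne_zero, zero_ne_one, and_true, and_false, if_true, if_false]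
  refine ⟨⟨⟨⟨?_, ?_⟩, ?_, ?_⟩, ⟨?_, ?_⟩, ?_, ?_⟩, ⟨⟨?_, ?_⟩, ?_, ?_⟩, ⟨?_, ?_⟩, ?_, ?_⟩ <;>
    grind

/-- Theorem 5.3.2: CNOT1 is Pfaffian under a heterogeneous change of basis. -/
theorem stmt15 :
    (cobGate ![mA, mB, mC, mD] cnot1 =
      fun b => ket ![0,0,0,0] b + (Complex.I/2) * ket ![1,1,0,0] b
        - Complex.I * ket ![1,0,1,0] b - (Complex.I/4) * ket ![1,0,0,1] b
        - 2 * ket ![0,1,1,0] b + (1/2 : ℂ) * ket ![0,1,0,1] b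
        - ket ![0,0,1,1] b + (Complex.I/2) * ket ![1,1,1,1] b) ∧
    cobGate ![mA, mB, mC, mD] cnot1 = fun b => sPf xiCnot b := by
  refine ⟨cobGate_cnot1_eq, ?_⟩
  rw [cobGate_cnot1_eq]
  funext b
  rw [sPf_four]
  have h01 : xiCnot 0 1 = Complex.I / 2 := rfl
  have h02 : xiCnot 0 2 = -Complex.I := rfl
  have h03 : xiCnot 0 3 = -Complex.I / 4 := rfl
  have h12 : xiCnot 1 2 = -2 := rfl
  have h13 : xiCnot 1 3 = 1 / 2 := rfl
  have h23 : xiCnot 2 3 = -1 := rfl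
  rw [h01, h02, h03, h12, h13, h23]
  ring
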